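/- Let X be a measurable space equipped with a partial order, μ a probability measure on X, and f, g : X → ℝ nonnegative measurable functions with ∫ f dμ = ∫ g dμ = 1. Assume g is monotone and g > 0 μ-almost everywhere, that g·log g, f·log f and f·log g are μ-integrable, and assume the stochastic domination property: for every monotone measurable h : X → ℝ which is integrable with respect to both the measures g·μ and f·μ, one has ∫ h g dμ ≤ ∫ h f dμ. Then ∫ g log g dμ ≤ ∫ f log f dμ. -/

import Mathlib

open MeasureTheory

/-!
Gibbs' inequality `∫ f log k ≤ ∫ f log f + ∫ k - ∫ f` reduces the theorem to
`∫ g log g ≤ ∫ f log g`, which is stochastic domination tested on `log g`. As `log g` is in general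
neither bounded nor, in Lean, monotone across the zeros of `g` (`Real.log 0 = 0`), domination is
tested instead on the logarithm of the truncation `k` of `g` to `[r⁻¹, r]`, which is bounded and
monotone. This truncation raises the mass of `g` by at most `μ(X) / r`, so
`∫ g log k ≤ ∫ f log f + μ(X) / r`. Since `g log k ≥ -1`, Fatou's lemma lets `r` tend to infinity.
-/

open Filter Topology

section Fatou

variable {α : Type*} [MeasurableSpace α] {μ : Measure α} {F : ℕ → α → ℝ} {G b : α → ℝ}
  {a : ℕ → ℝ} {A : ℝ}

theorem integrable_and_integral_le_of_tendsto_of_nonneg (hF : ∀ n, Integrable (F n) μ)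
    (hF0 : ∀ n, 0 ≤ᵐ[μ] F n) (hFG : ∀ᵐ x ∂μ, Tendsto (F · x) atTop (𝓝 (G x)))
    (hFa : ∀ n, ∫ x, F n x ∂μ ≤ a n) (ha : Tendsto a atTop (𝓝 A)) :
    Integrable G μ ∧ ∫ x, G x ∂μ ≤ A := by
  have hG : AEStronglyMeasurable G μ :=
    aestronglyMeasurable_of_tendsto_ae atTop (fun n => (hF n).aestronglyMeasurable) hFG
  have hG0 : 0 ≤ᵐ[μ] G := by
    filter_upwards [hFG, ae_all_iff.2 hF0] with x hx hx0 using ge_of_tendsto' hx hx0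
  have hA : 0 ≤ A :=
    ge_of_tendsto' ha fun n => (integral_nonneg_of_ae (hF0 n)).trans (hFa n)
  have hGA : ∫⁻ x, ENNReal.ofReal (G x) ∂μ ≤ ENNReal.ofReal A :=
    calc ∫⁻ x, ENNReal.ofReal (G x) ∂μ
        = ∫⁻ x, liminf (fun n => ENNReal.ofReal (F n x)) atTop ∂μ :=
          lintegral_congr_ae <| hFG.mono fun x hx => (ENNReal.tendsto_ofReal hx).liminf_eq.symm
      _ ≤ liminf (fun n => ∫⁻ x, ENNReal.ofReal (F n x) ∂μ) atTop :=
          lintegral_liminf_le' fun n => (hF n).aemeasurable.ennreal_ofReal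
      _ ≤ liminf (fun n => ENNReal.ofReal (a n)) atTop := by
          refine liminf_le_liminf (Eventually.of_forall fun n => ?_)
          rw [← ofReal_integral_eq_lintegral_ofReal (hF n) (hF0 n)]
          exact ENNReal.ofReal_le_ofReal (hFa n)
      _ = ENNReal.ofReal A := (ENNReal.tendsto_ofReal ha).liminf_eq
  have hGi : Integrable G μ :=
    (lintegral_ofReal_ne_top_iff_integrable hG hG0).1 (hGA.trans_lt ENNReal.ofReal_lt_top).ne
  rw [← ofReal_integral_eq_lintegral_ofReal hGi hG0, ENNReal.ofReal_le_ofReal_iff hA] at hGA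
  exact ⟨hGi, hGA⟩

theorem integrable_and_integral_le_of_tendsto_of_le (hF : ∀ n, Integrable (F n) μ)
    (hb : Integrable b μ) (hbF : ∀ n, b ≤ᵐ[μ] F n)
    (hFG : ∀ᵐ x ∂μ, Tendsto (F · x) atTop (𝓝 (G x)))
    (hFa : ∀ n, ∫ x, F n x ∂μ ≤ a n) (ha : Tendsto a atTop (𝓝 A)) :
    Integrable G μ ∧ ∫ x, G x ∂μ ≤ A := by
  obtain ⟨hGi, hGA⟩ := integrable_and_integral_le_of_tendsto_of_nonneg (μ := μ)
    (F := fun n x => F n x - b x) (G := fun x => G x - b x) (a := fun n => a n - ∫ x, b x ∂μ)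
    (fun n => (hF n).sub hb) (fun n => (hbF n).mono fun _ => sub_nonneg.2)
    (hFG.mono fun _ hx => hx.sub_const _)
    (fun n => by rw [integral_sub (hF n) hb]; exact sub_le_sub_right (hFa n) _)
    (ha.sub_const _)
  have hG : Integrable G μ :=
    (hGi.add hb).congr (ae_of_all _ fun _ => sub_add_cancel _ _)
  rw [integral_sub hG hb] at hGA
  exact ⟨hG, (sub_le_sub_iff_right _).1 hGA⟩

end Fatou

section Gibbs

theorem mul_log_le_mul_log_add_sub {s t : ℝ} (hs : 0 ≤ s) (ht : 0 < t) :
    s * Real.log t ≤ s * Real.log s + (t - s) := by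
  rcases hs.eq_or_lt with rfl | hs
  · simpa using ht.le
  · have hlog : Real.log t - Real.log s ≤ t / s - 1 := by
      rw [← Real.log_div ht.ne' hs.ne']
      exact Real.log_le_sub_one_of_pos (div_pos ht hs)
    calc s * Real.log t = s * Real.log s + s * (Real.log t - Real.log s) := by ring
      _ ≤ s * Real.log s + s * (t / s - 1) := by gcongr
      _ = s * Real.log s + (t - s) := by field_simp

theorem integral_mul_log_le_integral_mul_log_add_sub {α : Type*} [MeasurableSpace α]
    {μ : Measure α} {f k : α → ℝ} (hf : Integrable f μ) (hf0 : 0 ≤ᵐ[μ] f) (hk : Integrable k μ)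
    (hk0 : ∀ᵐ x ∂μ, 0 < k x) (hff : Integrable (fun x => f x * Real.log (f x)) μ)
    (hfk : Integrable (fun x => f x * Real.log (k x)) μ) :
    ∫ x, f x * Real.log (k x) ∂μ
      ≤ ∫ x, f x * Real.log (f x) ∂μ + (∫ x, k x ∂μ - ∫ x, f x ∂μ) := by
  have hkf : Integrable (fun x => k x - f x) μ := hk.sub hf
  rw [← integral_sub hk hf, ← integral_add hff hkf]
  refine integral_mono_ae hfk (hff.add hkf) ?_
  filter_upwards [hf0, hk0] with x hfx hkx using mul_log_le_mul_log_add_sub hfx hkx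

end Gibbs

/-- The truncation of `t` to the interval `[r⁻¹, r]`, meant for `1 ≤ r`. The logarithm of a
truncated density is a bounded test function that stays monotone where the density vanishes. -/
noncomputable def clamp (r t : ℝ) : ℝ := max r⁻¹ (min t r)

namespace clamp

variable {r t : ℝ}

theorem pos (hr : 0 < r) : 0 < clamp r t :=
  (inv_pos.2 hr).trans_le (le_max_left _ _)

theorem monotone (r : ℝ) : Monotone (clamp r) := fun _ _ hst =>
  max_le_max_left _ (min_le_min_right _ hst)

theorem measurable (r : ℝ) : Measurable (clamp r) :=
  measurable_const.max (measurable_id.min measurable_const)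

theorem le_add_inv (hr : 0 ≤ r) (ht : 0 ≤ t) : clamp r t ≤ t + r⁻¹ :=
  max_le (le_add_of_nonneg_left ht)
    ((min_le_left _ _).trans (le_add_of_nonneg_right (inv_nonneg.2 hr)))

theorem le_right (hr : 1 ≤ r) : clamp r t ≤ r :=
  max_le ((inv_le_one_of_one_le₀ hr).trans hr) (min_le_right _ _)

theorem abs_log_le (hr : 1 ≤ r) : |Real.log (clamp r t)| ≤ Real.log r := by
  have hr0 : 0 < r := one_pos.trans_le hr
  rw [abs_le, ← Real.log_inv]
  exact ⟨Real.log_le_log (inv_pos.2 hr0) (le_max_left _ _), Real.log_le_log (pos hr0) (le_right hr)⟩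

theorem neg_one_le_mul_log (hr : 1 ≤ r) (ht : 0 ≤ t) : -1 ≤ t * Real.log (clamp r t) := by
  have hmin : min t r ≤ clamp r t := le_max_right _ _
  rcases ht.eq_or_lt with rfl | ht0
  · simp
  rcases le_total t 1 with ht1 | ht1
  · rw [min_eq_left (ht1.trans hr)] at hmin
    calc -1 ≤ t - 1 := by linarith
      _ ≤ t * Real.log t := Real.self_sub_one_le_mul_log ht
      _ ≤ t * Real.log (clamp r t) := by gcongr
  · have hlog : 0 ≤ Real.log (clamp r t) := Real.log_nonneg ((le_min ht1 hr).trans hmin)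
    exact neg_one_lt_zero.le.trans (mul_nonneg ht hlog)

theorem tendsto_atTop (ht : 0 ≤ t) : Tendsto (fun r => clamp r t) atTop (𝓝 t) := by
  have hmax : Tendsto (fun r : ℝ => max r⁻¹ t) atTop (𝓝 t) := by
    simpa only [max_eq_right ht] using
      (tendsto_inv_atTop_zero (𝕜 := ℝ)).max (tendsto_const_nhds (x := t))
  refine hmax.congr' ?_
  filter_upwards [eventually_ge_atTop t] with r hr
  rw [clamp, min_eq_left hr]

theorem tendsto_mul_log_atTop (ht : 0 ≤ t) :
    Tendsto (fun r => t * Real.log (clamp r t)) atTop (𝓝 (t * Real.log t)) := by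
  rcases ht.eq_or_lt with rfl | ht0
  · simp
  · exact ((tendsto_atTop ht).log ht0.ne').const_mul t

variable {α : Type*} [MeasurableSpace α] {μ : Measure α} {g k : α → ℝ}

theorem integrable_comp [IsFiniteMeasure μ] (hr : 1 ≤ r) (hg : AEMeasurable g μ) :
    Integrable (fun x => clamp r (g x)) μ := by
  refine Integrable.of_bound ((measurable r).comp_aemeasurable hg).aestronglyMeasurable r
    (ae_of_all _ fun x => ?_)
  rw [Real.norm_of_nonneg (pos (one_pos.trans_le hr)).le]
  exact le_right hr

theorem integral_comp_le [IsFiniteMeasure μ] (hr : 1 ≤ r) (hg : Integrable g μ)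
    (hg0 : 0 ≤ᵐ[μ] g) :
    ∫ x, clamp r (g x) ∂μ ≤ ∫ x, g x ∂μ + r⁻¹ * μ.real Set.univ :=
  calc ∫ x, clamp r (g x) ∂μ ≤ ∫ x, (g x + r⁻¹) ∂μ :=
        integral_mono_ae (integrable_comp hr hg.aemeasurable) (hg.add (integrable_const _))
          (hg0.mono fun _ hx => le_add_inv (one_pos.trans_le hr).le hx)
    _ = ∫ x, g x ∂μ + r⁻¹ * μ.real Set.univ := by
        rw [integral_add hg (integrable_const _), integral_const, smul_eq_mul, mul_comm]

theorem integrable_mul_log_comp (hr : 1 ≤ r) (hg : AEMeasurable g μ) (hk : Integrable k μ) :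
    Integrable (fun x => k x * Real.log (clamp r (g x))) μ :=
  hk.mul_bdd (Real.measurable_log.comp_aemeasurable
    ((measurable r).comp_aemeasurable hg)).aestronglyMeasurable (ae_of_all _ fun _ => abs_log_le hr)

end clamp

section Censoring

variable {X : Type*} [MeasurableSpace X] [Preorder X] {μ : Measure X} [IsFiniteMeasure μ]
  {f g : X → ℝ}

theorem integral_mul_log_clamp_le {r : ℝ} (hr : 1 ≤ r) (hg : Measurable g)
    (hf0 : 0 ≤ᵐ[μ] f) (hg0 : 0 ≤ᵐ[μ] g) (hfi : Integrable f μ) (hgi : Integrable g μ)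
    (hgmono : Monotone g) (hff : Integrable (fun x => f x * Real.log (f x)) μ)
    (hdom : ∀ h : X → ℝ, Measurable h → Monotone h → (∃ C, ∀ x, |h x| ≤ C) →
      ∫ x, h x * g x ∂μ ≤ ∫ x, h x * f x ∂μ) :
    ∫ x, g x * Real.log (clamp r (g x)) ∂μ
      ≤ ∫ x, f x * Real.log (f x) ∂μ + r⁻¹ * μ.real Set.univ := by
  have hr0 : 0 < r := one_pos.trans_le hr
  have hcomp : ∫ x, g x * Real.log (clamp r (g x)) ∂μ
      ≤ ∫ x, f x * Real.log (clamp r (g x)) ∂μ := by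
    simpa only [mul_comm] using hdom (fun x => Real.log (clamp r (g x)))
      (Real.measurable_log.comp ((clamp.measurable r).comp hg))
      (fun x y hxy => Real.log_le_log (clamp.pos hr0) (clamp.monotone r (hgmono hxy)))
      ⟨Real.log r, fun _ => clamp.abs_log_le hr⟩
  have hgibbs : ∫ x, f x * Real.log (clamp r (g x)) ∂μ
      ≤ ∫ x, f x * Real.log (f x) ∂μ + (∫ x, clamp r (g x) ∂μ - ∫ x, f x ∂μ) :=
    integral_mul_log_le_integral_mul_log_add_sub hfi hf0
      (clamp.integrable_comp hr hg.aemeasurable) (ae_of_all _ fun _ => clamp.pos hr0) hff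
      (clamp.integrable_mul_log_comp hr hg.aemeasurable hfi)
  have hclamp : ∫ x, clamp r (g x) ∂μ ≤ ∫ x, g x ∂μ + r⁻¹ * μ.real Set.univ :=
    clamp.integral_comp_le hr hgi hg0
  have hmass : ∫ x, g x ∂μ ≤ ∫ x, f x ∂μ := by
    simpa only [one_mul] using
      hdom (fun _ => 1) measurable_const monotone_const ⟨|1|, fun _ => le_rfl⟩
  linarith

theorem entropy_censoring_general (hg : Measurable g)
    (hf0 : 0 ≤ᵐ[μ] f) (hg0 : 0 ≤ᵐ[μ] g) (hfi : Integrable f μ) (hgi : Integrable g μ)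
    (hgmono : Monotone g) (hff : Integrable (fun x => f x * Real.log (f x)) μ)
    (hdom : ∀ h : X → ℝ, Measurable h → Monotone h → (∃ C, ∀ x, |h x| ≤ C) →
      ∫ x, h x * g x ∂μ ≤ ∫ x, h x * f x ∂μ) :
    Integrable (fun x => g x * Real.log (g x)) μ ∧
      ∫ x, g x * Real.log (g x) ∂μ ≤ ∫ x, f x * Real.log (f x) ∂μ := by
  have hr (n : ℕ) : 1 ≤ (n : ℝ) + 1 := le_add_of_nonneg_left n.cast_nonneg
  have hlim : Tendsto (fun n : ℕ => (n : ℝ) + 1) atTop atTop :=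
    tendsto_atTop_add_const_right _ 1 tendsto_natCast_atTop_atTop
  refine integrable_and_integral_le_of_tendsto_of_le
    (fun n => clamp.integrable_mul_log_comp (hr n) hg.aemeasurable hgi)
    (integrable_const (-1))
    (fun n => hg0.mono fun _ hx => clamp.neg_one_le_mul_log (hr n) hx)
    (hg0.mono fun _ hx => (clamp.tendsto_mul_log_atTop hx).comp hlim)
    (fun n => integral_mul_log_clamp_le (hr n) hg hf0 hg0 hfi hgi hgmono hff hdom) ?_
  simpa using ((tendsto_inv_atTop_zero.comp hlim).mul_const (μ.real Set.univ)).const_add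
    (∫ x, f x * Real.log (f x) ∂μ)

end Censoring

theorem entropy_censoring
    {X : Type*} [MeasurableSpace X] [PartialOrder X]
    (μ : Measure X) [IsProbabilityMeasure μ]
    (f g : X → ℝ) (hf : Measurable f) (hg : Measurable g)
    (hf0 : ∀ x, 0 ≤ f x) (hg0 : ∀ x, 0 ≤ g x)
    (hf1 : ∫ x, f x ∂μ = 1) (hg1 : ∫ x, g x ∂μ = 1)
    (hgmono : Monotone g)
    (hgpos : ∀ᵐ x ∂μ, 0 < g x)
    (hgg : Integrable (fun x => g x * Real.log (g x)) μ)
    (hff : Integrable (fun x => f x * Real.log (f x)) μ)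
    (hfg : Integrable (fun x => f x * Real.log (g x)) μ)
    (hdom : ∀ h : X → ℝ, Measurable h → Monotone h →
      Integrable (fun x => h x * g x) μ → Integrable (fun x => h x * f x) μ →
      ∫ x, h x * g x ∂μ ≤ ∫ x, h x * f x ∂μ) :
    ∫ x, g x * Real.log (g x) ∂μ ≤ ∫ x, f x * Real.log (f x) ∂μ := by
  have hfi : Integrable f μ := integrable_of_integral_eq_one hf1
  have hgi : Integrable g μ := integrable_of_integral_eq_one hg1
  exact (entropy_censoring_general hg (ae_of_all _ hf0) (ae_of_all _ hg0) hfi hgi hgmono hff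
    fun h hh hmono ⟨_, hC⟩ => hdom h hh hmono
      (hgi.bdd_mul hh.aestronglyMeasurable (ae_of_all _ hC))
      (hfi.bdd_mul hh.aestronglyMeasurable (ae_of_all _ hC))).2
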